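/- There is a constant K independent of s, λ and T such that, for any s ≥ C T¹⁰, the weight combination e^{−2sα} e^{−2sα*} ξ³ satisfies the pointwise derivative bounds |(e^{−2sα} e^{−2sα*} ξ³)_t| ≤ K T s e^{−2sα} e^{−2sα*} ξ^{4 + 1/5} and |Δ(e^{−2sα} e^{−2sα*} ξ³)| ≤ K s² λ² e^{−2sα} e^{−2sα*} ξ⁵ on Q. -/

import Mathlib

open MeasureTheory Real Set

noncomputable section

/-- Euclidean space `ℝ^N`. -/
abbrev Evec (N : ℕ) := EuclideanSpace ℝ (Fin N)

/-- `i`-th partial derivative of a scalar field. -/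
def pd {N : ℕ} (i : Fin N) (u : Evec N → ℝ) (x : Evec N) : ℝ :=
  fderiv ℝ u x (EuclideanSpace.single i 1)

/-- Laplacian of a scalar field. -/
def lap {N : ℕ} (u : Evec N → ℝ) (x : Evec N) : ℝ := ∑ i, pd i (pd i u) x

/-- Divergence of a vector field. -/
def vdiv {N : ℕ} (w : Evec N → Evec N) (x : Evec N) : ℝ := ∑ i, pd i (fun y => w y i) x

/-- Time derivative of the `i`-th component of a time dependent vector field. -/
def dtc {N : ℕ} (w : ℝ → Evec N → Evec N) (t : ℝ) (x : Evec N) (i : Fin N) : ℝ :=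
  deriv (fun τ => w τ x i) t

/-- `((w·∇)z)_i = ∑_j w_j ∂_j z_i`. -/
def conv {N : ℕ} (w z : Evec N → Evec N) (x : Evec N) (i : Fin N) : ℝ :=
  ∑ j, w x j * pd j (fun y => z y i) x

/-- `((z,∇ᵗ)w)_i = ∑_j z_j ∂_i w_j`. -/
def tconv {N : ℕ} (z w : Evec N → Evec N) (x : Evec N) (i : Fin N) : ℝ :=
  ∑ j, z x j * pd i (fun y => w y j) x

/-- The time factor `t⁵(T-t)⁵`. -/
def tw (T t : ℝ) : ℝ := t ^ 5 * (T - t) ^ 5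

/-- The Carleman weight `α(x,t)`. -/
def wA {N : ℕ} (lam Mη T : ℝ) (η : Evec N → ℝ) (t : ℝ) (x : Evec N) : ℝ :=
  (Real.exp (12 * lam * Mη) - Real.exp (lam * (10 * Mη + η x))) / tw T t

/-- The Carleman weight `ξ(x,t)`. -/
def wX {N : ℕ} (lam Mη T : ℝ) (η : Evec N → ℝ) (t : ℝ) (x : Evec N) : ℝ :=
  Real.exp (lam * (10 * Mη + η x)) / tw T t

/-- `α*(t) = max_x α(x,t)` (attained where `η = 0`). -/
def wAs (lam Mη T t : ℝ) : ℝ :=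
  (Real.exp (12 * lam * Mη) - Real.exp (10 * lam * Mη)) / tw T t

/-- `α̂(t) = min_x α(x,t)` (attained where `η = ‖η‖_∞`). -/
def wAh (lam Mη T t : ℝ) : ℝ :=
  (Real.exp (12 * lam * Mη) - Real.exp (11 * lam * Mη)) / tw T t

/-- `ξ*(t) = min_x ξ(x,t)`. -/
def wXs (lam Mη T t : ℝ) : ℝ := Real.exp (10 * lam * Mη) / tw T t

/-- `ξ̂(t) = max_x ξ(x,t)`. -/
def wXh (lam Mη T t : ℝ) : ℝ := Real.exp (11 * lam * Mη) / tw T t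

/-- The combined weight `e^{−2sα} e^{−2sα*} ξ³`. -/
def wComb {N : ℕ} (s lam Mη T : ℝ) (η : Evec N → ℝ) (t : ℝ) (x : Evec N) : ℝ :=
  Real.exp (-2 * s * wA lam Mη T η t x) * Real.exp (-2 * s * wAs lam Mη T t)
    * (wX lam Mη T η t x) ^ 3

theorem aux_pd_comp {N : ℕ} (i : Fin N) (η : Evec N → ℝ) (G : ℝ → ℝ) (dG : ℝ) (x : Evec N)
    (hη : DifferentiableAt ℝ η x) (hG : HasDerivAt G dG (η x)) :
    pd i (fun y => G (η y)) x = dG * pd i η x := by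
  unfold pd
  have h := hG.comp_hasFDerivAt x hη.hasFDerivAt
  have h2 : fderiv ℝ (fun y => G (η y)) x = dG • fderiv ℝ η x := h.fderiv
  rw [h2]; simp

theorem aux_pd_contDiff {N : ℕ} (i : Fin N) (η : Evec N → ℝ) (hη : ContDiff ℝ 2 η) :
    ContDiff ℝ 1 (pd i η) := by
  unfold pd
  have h : ContDiff ℝ 1 (fderiv ℝ η) := hη.fderiv_right (by norm_num)
  exact h.clm_apply contDiff_const

theorem aux_pd_cont {N : ℕ} (i : Fin N) (η : Evec N → ℝ) (hη : ContDiff ℝ 1 η) :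
    Continuous (pd i η) := by
  unfold pd
  have h : Continuous (fderiv ℝ η) := hη.continuous_fderiv (by norm_num)
  exact h.clm_apply continuous_const

theorem aux_pd_pd {N : ℕ} (i : Fin N) (η : Evec N → ℝ) (hη : ContDiff ℝ 2 η)
    (G G1 G2 : ℝ → ℝ) (h1 : ∀ r, HasDerivAt G (G1 r) r) (h2 : ∀ r, HasDerivAt G1 (G2 r) r)
    (x : Evec N) :
    pd i (pd i (fun y => G (η y))) x
      = G2 (η x) * (pd i η x) ^ 2 + G1 (η x) * pd i (pd i η) x := by
  have hd : Differentiable ℝ η := hη.differentiable (by norm_num)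
  have e : pd i (fun y => G (η y)) = fun y => G1 (η y) * pd i η y := by
    funext y; exact aux_pd_comp i η G _ y (hd y) (h1 _)
  have hp : DifferentiableAt ℝ (pd i η) x :=
    (aux_pd_contDiff i η hη).differentiable (by norm_num) x
  have hg : HasFDerivAt (fun y => G1 (η y)) (G2 (η x) • fderiv ℝ η x) x :=
    (h2 (η x)).comp_hasFDerivAt x (hd x).hasFDerivAt
  rw [e]
  have h3 := (hg.mul hp.hasFDerivAt).fderiv
  have h4 : pd i (fun y => G1 (η y) * pd i η y) x
      = (G1 (η x) • fderiv ℝ (pd i η) x + pd i η x • (G2 (η x) • fderiv ℝ η x))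
        (EuclideanSpace.single i 1) := by
    rw [← h3]; rfl
  rw [h4]
  simp only [ContinuousLinearMap.add_apply, ContinuousLinearMap.smul_apply, smul_eq_mul]
  unfold pd
  ring

theorem aux_lap {N : ℕ} (s lam M T t : ℝ) (η : Evec N → ℝ) (hη : ContDiff ℝ 2 η) (x : Evec N)
    (hlam : 1 ≤ lam) (hX : 0 < wX lam M T η t x) (hsX : 1 ≤ s * wX lam M T η t x) :
    |lap (fun y => wComb s lam M T η t y) x|
      ≤ (∑ i, (27 * (pd i η x) ^ 2 + 5 * |pd i (pd i η) x|)) *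
        (s ^ 2 * lam ^ 2 * Real.exp (-2 * s * wA lam M T η t x)
                * Real.exp (-2 * s * wAs lam M T t) * (wX lam M T η t x) ^ 5) := by
  set c := Real.exp (-2 * s * wAs lam M T t) with hc
  set w := tw T t with hw
  let X : ℝ → ℝ := fun r => Real.exp (lam * (10 * M + r)) / w
  let V : ℝ → ℝ := fun r => Real.exp (-2 * s * (Real.exp (12 * lam * M) / w - X r))
  let G : ℝ → ℝ := fun r => V r * c * X r ^ 3
  let G1 : ℝ → ℝ := fun r => V r * c * lam * (2 * s * X r ^ 4 + 3 * X r ^ 3)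
  let G2 : ℝ → ℝ := fun r => V r * c * lam ^ 2 *
    (4 * s ^ 2 * X r ^ 5 + 14 * s * X r ^ 4 + 9 * X r ^ 3)
  have hXd : ∀ r, HasDerivAt X (lam * X r) r := by
    intro r
    have h := (((hasDerivAt_id r).const_add (10 * M)).const_mul lam).exp.div_const w
    refine h.congr_deriv ?_
    simp only [X, id]; ring
  have hVd : ∀ r, HasDerivAt V (V r * (2 * s * lam * X r)) r := by
    intro r
    have h := (((hXd r).const_sub (Real.exp (12 * lam * M) / w)).const_mul (-2 * s)).exp
    refine h.congr_deriv ?_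
    simp only [V]; ring
  have h1 : ∀ r, HasDerivAt G (G1 r) r := by
    intro r
    refine (((hVd r).mul_const c).mul ((hXd r).pow 3)).congr_deriv ?_
    simp only [G1, Pi.pow_apply]; push_cast; ring
  have h2 : ∀ r, HasDerivAt G1 (G2 r) r := by
    intro r
    refine ((((hVd r).mul_const c).mul_const lam).mul
      ((((hXd r).pow 4).const_mul (2 * s)).add (((hXd r).pow 3).const_mul 3))).congr_deriv ?_
    simp only [G2, Pi.pow_apply, Pi.add_apply]; push_cast; ring
  have hV : Real.exp (-2 * s * wA lam M T η t x) = V (η x) := by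
    simp only [V, X, wA, sub_div, hw]
  have hGe : (fun y => wComb s lam M T η t y) = fun y => G (η y) := by
    funext y
    simp only [wComb, wA, wX, sub_div, G, V, X, hc, hw]
  have hXe : wX lam M T η t x = X (η x) := rfl
  rw [hGe, hV, hXe]
  rw [hXe] at hX hsX
  unfold lap
  rw [Finset.sum_mul]
  refine (Finset.abs_sum_le_sum_abs _ _).trans (Finset.sum_le_sum fun i _ => ?_)
  rw [aux_pd_pd i η hη G G1 G2 h1 h2 x]
  simp only [G1, G2]
  have hVp : 0 < V (η x) := Real.exp_pos _
  have hcp : 0 < c := Real.exp_pos _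
  generalize V (η x) = v at *
  generalize X (η x) = ξ at *
  generalize pd i (pd i η) x = b at *
  generalize pd i η x = a at *
  have hy0 : 0 ≤ s * ξ := by linarith
  have hy2 : s * ξ ≤ (s * ξ) ^ 2 := by nlinarith
  have hl2 : lam ≤ lam ^ 2 := by nlinarith
  have hx3 : 0 < ξ ^ 3 := by positivity
  have hvc : 0 < v * c := by positivity
  have A1 : 0 ≤ 4 * s ^ 2 * ξ ^ 5 + 14 * s * ξ ^ 4 + 9 * ξ ^ 3 := by
    have : 4 * s ^ 2 * ξ ^ 5 + 14 * s * ξ ^ 4 + 9 * ξ ^ 3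
      = ξ ^ 3 * (4 * (s * ξ) ^ 2 + 14 * (s * ξ) + 9) := by ring
    rw [this]; positivity
  have A2 : 4 * s ^ 2 * ξ ^ 5 + 14 * s * ξ ^ 4 + 9 * ξ ^ 3 ≤ 27 * (s ^ 2 * ξ ^ 5) := by
    have : 27 * (s ^ 2 * ξ ^ 5) - (4 * s ^ 2 * ξ ^ 5 + 14 * s * ξ ^ 4 + 9 * ξ ^ 3)
      = ξ ^ 3 * (23 * (s * ξ) ^ 2 - 14 * (s * ξ) - 9) := by ring
    have h0 : 0 ≤ ξ ^ 3 * (23 * (s * ξ) ^ 2 - 14 * (s * ξ) - 9) :=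
      mul_nonneg hx3.le (by linarith)
    linarith
  have B1 : 0 ≤ 2 * s * ξ ^ 4 + 3 * ξ ^ 3 := by
    have : 2 * s * ξ ^ 4 + 3 * ξ ^ 3 = ξ ^ 3 * (2 * (s * ξ) + 3) := by ring
    rw [this]; positivity
  have B2 : 2 * s * ξ ^ 4 + 3 * ξ ^ 3 ≤ 5 * (s ^ 2 * ξ ^ 5) := by
    have : 5 * (s ^ 2 * ξ ^ 5) - (2 * s * ξ ^ 4 + 3 * ξ ^ 3)
      = ξ ^ 3 * (5 * (s * ξ) ^ 2 - 2 * (s * ξ) - 3) := by ring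
    have h0 : 0 ≤ ξ ^ 3 * (5 * (s * ξ) ^ 2 - 2 * (s * ξ) - 3) :=
      mul_nonneg hx3.le (by linarith)
    linarith
  have hl0 : 0 ≤ lam := by linarith
  refine (abs_add_le _ _).trans ?_
  rw [abs_mul, abs_mul _ b, abs_of_nonneg (mul_nonneg (by positivity) A1),
    abs_of_nonneg (mul_nonneg (by positivity) B1), abs_of_nonneg (sq_nonneg a)]
  have C1 : v * c * lam ^ 2 * (4 * s ^ 2 * ξ ^ 5 + 14 * s * ξ ^ 4 + 9 * ξ ^ 3) * a ^ 2
      ≤ v * c * lam ^ 2 * (27 * (s ^ 2 * ξ ^ 5)) * a ^ 2 := by gcongr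
  have C2 : v * c * lam * (2 * s * ξ ^ 4 + 3 * ξ ^ 3) * |b|
      ≤ v * c * lam ^ 2 * (5 * (s ^ 2 * ξ ^ 5)) * |b| := by gcongr
  refine (add_le_add C1 C2).trans (le_of_eq ?_)
  ring

theorem aux_time {N : ℕ} (s lam M T t : ℝ) (η : Evec N → ℝ) (x : Evec N)
    (hT : 0 < T) (hlam : 1 ≤ lam) (hs : T ^ 10 ≤ s) (ht : t ∈ Set.Ioo (0:ℝ) T)
    (h0 : 0 < η x) (hM : η x ≤ M) :
    |deriv (fun τ => wComb s lam M T η τ x) t|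
              ≤ 35 * T * s * Real.exp (-2 * s * wA lam M T η t x)
                * Real.exp (-2 * s * wAs lam M T t)
                * (wX lam M T η t x) ^ ((4:ℝ) + 1/5) := by
  obtain ⟨ht0, htT⟩ := ht
  have hTt : 0 < T - t := by linarith
  set q := t * (T - t) with hq
  have hq0 : 0 < q := mul_pos ht0 hTt
  have htw : tw T t = q ^ 5 := by rw [hq, mul_pow]; rfl
  have hs0 : 0 < s := lt_of_lt_of_le (by positivity) hs
  have hqs : q ^ 5 ≤ s := by
    have : q ≤ T ^ 2 := by nlinarith
    calc q ^ 5 ≤ (T ^ 2) ^ 5 := by gcongr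
      _ = T ^ 10 := by ring
      _ ≤ s := hs
  set P := Real.exp (12 * lam * M) - Real.exp (lam * (10 * M + η x)) with hP
  set Q := Real.exp (12 * lam * M) - Real.exp (10 * lam * M) with hQ
  set R := Real.exp (lam * (10 * M + η x)) with hR
  set E := Real.exp (12 * lam * M) with hE
  have hM0 : 0 < M := by linarith
  have hl0 : 0 < lam := by linarith
  have hR0 : 0 < R := Real.exp_pos _
  have hP0 : 0 ≤ P := by
    rw [hP, sub_nonneg]; apply Real.exp_le_exp.2; nlinarith
  have hQ0 : 0 ≤ Q := by
    rw [hQ, sub_nonneg]; apply Real.exp_le_exp.2; nlinarith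
  have hPE : P ≤ E := by linarith
  have hQE : Q ≤ E := by have := Real.exp_pos (10 * lam * M); linarith
  have hE1 : 1 ≤ E := Real.one_le_exp (by positivity)
  -- derivative of the time factor
  have hd : HasDerivAt (fun τ => tw T τ) (5 * q ^ 4 * (T - 2 * t)) t := by
    have h := ((hasDerivAt_id t).pow 5).mul (((hasDerivAt_id t).const_sub T).pow 5)
    refine (h.congr_deriv ?_)
    simp only [Pi.pow_apply, id, hq]; push_cast; ring
  have hne : tw T t ≠ 0 := by rw [htw]; positivity
  have hdiv : ∀ p : ℝ, HasDerivAt (fun τ => p / tw T τ) (-(p * (5 * (T - 2 * t)) / q ^ 6)) t := by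
    intro p
    refine ((hasDerivAt_const t p).div hd hne).congr_deriv ?_
    rw [htw]; field_simp; ring
  have hD : HasDerivAt (fun τ => wComb s lam M T η τ x)
      (wComb s lam M T η t x * (5 * (T - 2 * t) / q * (2 * s * (P + Q) / q ^ 5 - 3))) t := by
    refine (((((hdiv P).const_mul (-2 * s)).exp).mul (((hdiv Q).const_mul (-2 * s)).exp)).mul
      ((hdiv R).pow 3)).congr_deriv ?_
    have hform : wComb s lam M T η t x = Real.exp (-2 * s * (P / tw T t)) *
        Real.exp (-2 * s * (Q / tw T t)) * (R / tw T t) ^ 3 := rfl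
    simp only [hform, Pi.pow_apply, Pi.mul_apply, htw]
    generalize Real.exp (-2 * s * (P / q ^ 5)) = e1
    generalize Real.exp (-2 * s * (Q / q ^ 5)) = e2
    push_cast
    field_simp
    ring
  rw [hD.deriv]
  have hX0 : 0 < wX lam M T η t x := by
    show 0 < R / tw T t
    rw [htw]; positivity
  have hkey : E / q ^ 6 ≤ (wX lam M T η t x) ^ ((6:ℝ) / 5) := by
    have e1 : E / q ^ 6 = (Real.exp (10 * lam * M) / q ^ 5) ^ ((6:ℝ) / 5) := by
      rw [Real.div_rpow (Real.exp_pos _).le (by positivity), ← Real.exp_mul,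
        ← Real.rpow_natCast q 5, ← Real.rpow_mul hq0.le, ← Real.rpow_natCast q 6, hE]
      congr 1
      · congr 1; ring
      · congr 1; norm_num
    rw [e1]
    apply Real.rpow_le_rpow (by positivity) _ (by norm_num)
    show _ ≤ R / tw T t
    rw [htw]
    gcongr
    apply Real.exp_le_exp.2
    nlinarith
  have hpow : (wX lam M T η t x) ^ ((4:ℝ) + 1/5)
      = (wX lam M T η t x) ^ 3 * (wX lam M T η t x) ^ ((6:ℝ) / 5) := by
    rw [← Real.rpow_natCast, ← Real.rpow_add hX0]; congr 1; norm_num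
  have hb : |5 * (T - 2 * t) / q * (2 * s * (P + Q) / q ^ 5 - 3)| ≤ 35 * T * s * (E / q ^ 6) := by
    rw [abs_mul]
    have b1 : |5 * (T - 2 * t) / q| ≤ 5 * T / q := by
      rw [abs_div, abs_of_pos hq0]
      gcongr
      rw [abs_le]; constructor <;> linarith
    have b2 : |2 * s * (P + Q) / q ^ 5 - 3| ≤ 7 * (s * E / q ^ 5) := by
      have c1 : 1 ≤ s * E / q ^ 5 := by
        rw [le_div_iff₀ (by positivity)]; nlinarith
      have c2 : 0 ≤ 2 * s * (P + Q) / q ^ 5 := by positivity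
      have c3 : 2 * s * (P + Q) / q ^ 5 ≤ 4 * (s * E / q ^ 5) := by
        calc 2 * s * (P + Q) / q ^ 5 ≤ 2 * s * (E + E) / q ^ 5 := by gcongr
          _ = _ := by ring
      rw [abs_le]; constructor <;> linarith
    calc _ ≤ 5 * T / q * (7 * (s * E / q ^ 5)) :=
          mul_le_mul b1 b2 (abs_nonneg _) (by positivity)
      _ = _ := by field_simp; ring
  have hC0 : 0 ≤ wComb s lam M T η t x := by unfold wComb; positivity
  rw [abs_mul, abs_of_nonneg hC0, hpow]
  calc _ ≤ wComb s lam M T η t x * (35 * T * s * (wX lam M T η t x) ^ ((6:ℝ) / 5)) := by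
        gcongr
        exact hb.trans (by gcongr)
    _ = _ := by unfold wComb; ring

/-- pointwise bounds for the derivatives of the weight
`e^{−2sα}e^{−2sα*}ξ³`: `|(e^{−2sα}e^{−2sα*}ξ³)_t| ≤ K T s e^{−2sα}e^{−2sα*}ξ^{4+1/5}` and
`|Δ(e^{−2sα}e^{−2sα*}ξ³)| ≤ K s² λ² e^{−2sα}e^{−2sα*}ξ⁵` for `s ≥ C T¹⁰`, with `K`
independent of `s`, `λ` and `T`. -/
theorem statement17
    (N : ℕ)
    (Ω : Set (Evec N)) (hΩo : IsOpen Ω) (hΩconn : IsConnected Ω)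
    (hΩb : Bornology.IsBounded Ω)
    (ω₀ : Set (Evec N)) (hω₀o : IsOpen ω₀) (hω₀ne : ω₀.Nonempty) (hω₀sub : ω₀ ⊆ Ω)
    (η : Evec N → ℝ) (hηC : ContDiff ℝ 2 η)
    (Kη : ℝ) (hKη : 0 < Kη)
    (hηgrad : ∀ x ∈ Ω \ closure ω₀, Kη ≤ ‖fderiv ℝ η x‖)
    (hηpos : ∀ x ∈ Ω, 0 < η x) (hηbd : ∀ x ∈ frontier Ω, η x = 0)
    (Mη : ℝ) (hMη : IsGreatest (η '' closure Ω) Mη) :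
    ∃ K : ℝ, 0 < K ∧ ∃ C : ℝ, 0 < C ∧
      ∀ T : ℝ, 0 < T → ∀ lam : ℝ, 1 ≤ lam → ∀ s : ℝ, C * T ^ 10 ≤ s →
        ∀ t ∈ Set.Ioo (0:ℝ) T, ∀ x ∈ Ω,
          |deriv (fun τ => wComb s lam Mη T η τ x) t|
              ≤ K * T * s * Real.exp (-2 * s * wA lam Mη T η t x)
                * Real.exp (-2 * s * wAs lam Mη T t)
                * (wX lam Mη T η t x) ^ ((4:ℝ) + 1/5) ∧
          |lap (fun y => wComb s lam Mη T η t y) x|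
              ≤ K * s ^ 2 * lam ^ 2 * Real.exp (-2 * s * wA lam Mη T η t x)
                * Real.exp (-2 * s * wAs lam Mη T t) * (wX lam Mη T η t x) ^ 5 := by
  have hcomp : IsCompact (closure Ω) := hΩb.isCompact_closure
  have hcont : Continuous (fun x => ∑ i, (27 * (pd i η x) ^ 2 + 5 * |pd i (pd i η) x|)) := by
    refine continuous_finsetSum _ fun i _ => ?_
    have h1 := aux_pd_contDiff i η hηC
    have h2 := aux_pd_cont i _ h1
    exact (continuous_const.mul (h1.continuous.pow 2)).add (continuous_const.mul h2.abs)
  obtain ⟨B, hB⟩ := hcomp.bddAbove_image hcont.continuousOn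
  refine ⟨max 35 B, by positivity, 1, one_pos, ?_⟩
  intro T hT lam hlam s hs t ht x hx
  rw [one_mul] at hs
  have hxc : x ∈ closure Ω := subset_closure hx
  have h0 := hηpos x hx
  have hM : η x ≤ Mη := hMη.2 ⟨x, hxc, rfl⟩
  have hs0 : 0 < s := lt_of_lt_of_le (by positivity) hs
  have hw0 : 0 < tw T t := by
    have := ht.1
    have : 0 < T - t := by linarith [ht.2]
    unfold tw; positivity
  have hws : tw T t ≤ s := by
    have := ht.1
    have h3 : 0 < T - t := by linarith [ht.2]
    have : t * (T - t) ≤ T ^ 2 := by nlinarith [ht.2]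
    calc tw T t = (t * (T - t)) ^ 5 := by rw [mul_pow]; rfl
      _ ≤ (T ^ 2) ^ 5 := by gcongr
      _ = T ^ 10 := by ring
      _ ≤ s := hs
  have hX0 : 0 < wX lam Mη T η t x := div_pos (Real.exp_pos _) hw0
  have hsX : 1 ≤ s * wX lam Mη T η t x := by
    unfold wX
    rw [← mul_div_assoc, le_div_iff₀ hw0]
    have : 1 ≤ Real.exp (lam * (10 * Mη + η x)) := by
      apply Real.one_le_exp
      have : 0 < Mη := by linarith
      positivity
    nlinarith
  constructor
  · refine (aux_time s lam Mη T t η x hT hlam hs ht h0 hM).trans ?_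
    gcongr
    exact le_max_left _ _
  · refine (aux_lap s lam Mη T t η hηC x hlam hX0 hsX).trans ?_
    have hBx := (hB ⟨x, hxc, rfl⟩).trans (le_max_right 35 B)
    refine (mul_le_mul_of_nonneg_right hBx (by positivity)).trans (le_of_eq ?_)
    ring
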